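/- Let R be a commutative ring of prime characteristic p, A = A_n(R) the n-th Weyl algebra over R, C = R[x_1^p, …, x_n^p, ∂_1^p, …, ∂_n^p] its center, and φ: A → A an R-algebra homomorphism. Consider the A-bimodule ₍φ₎A₍φ₎, i.e. A with bimodule multiplication x·s·y = φ(x) s φ(y). Then: (a) ₍φ₎A₍φ₎ is C-linear, i.e. r·m = m·r for all r ∈ C; (b) the set of bimodule invariants {m ∈ ₍φ₎A₍φ₎ : a·m = m·a for all a ∈ A} equals C (viewed as a left C-module via φ); and (c) ₍φ₎A₍φ₎ is a finitely generated A-bimodule (equivalently, finitely generated module over A ⊗_C A^{op}) if and only if A's center C is a finitely generated module over its subring φ(C), i.e. φ|_C is finite. -/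

import Mathlib

/-- The commutation relations defining the `n`-th Weyl algebra over `R`:
`[x_i, x_j] = 0`, `[∂_i, ∂_j] = 0`, `[∂_i, x_j] = δ_{ij}`.  Generators are indexed by
`Fin n ⊕ Fin n`, with `.inl i` corresponding to `x_i` and `.inr i` to `∂_i`. -/
inductive WeylRel (R : Type*) [CommRing R] (n : ℕ) :
    FreeAlgebra R (Fin n ⊕ Fin n) → FreeAlgebra R (Fin n ⊕ Fin n) → Prop
  | xx (i j : Fin n) : WeylRel R n
      (FreeAlgebra.ι R (.inl i) * FreeAlgebra.ι R (.inl j))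
      (FreeAlgebra.ι R (.inl j) * FreeAlgebra.ι R (.inl i))
  | dd (i j : Fin n) : WeylRel R n
      (FreeAlgebra.ι R (.inr i) * FreeAlgebra.ι R (.inr j))
      (FreeAlgebra.ι R (.inr j) * FreeAlgebra.ι R (.inr i))
  | dx (i j : Fin n) : WeylRel R n
      (FreeAlgebra.ι R (.inr i) * FreeAlgebra.ι R (.inl j))
      (FreeAlgebra.ι R (.inl j) * FreeAlgebra.ι R (.inr i) + if i = j then 1 else 0)

/-- The `n`-th Weyl algebra `A_n(R)` over a commutative ring `R`, as the quotient of the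
free `R`-algebra on `x_1, …, x_n, ∂_1, …, ∂_n` by the Weyl relations. -/
abbrev WeylAlgebra (R : Type*) [CommRing R] (n : ℕ) : Type _ := RingQuot (WeylRel R n)

/-- The generator `x_i` of the Weyl algebra. -/
noncomputable def wX (R : Type*) [CommRing R] {n : ℕ} (i : Fin n) : WeylAlgebra R n :=
  RingQuot.mkAlgHom R (WeylRel R n) (FreeAlgebra.ι R (.inl i))

/-- The generator `∂_i` of the Weyl algebra. -/
noncomputable def wD (R : Type*) [CommRing R] {n : ℕ} (i : Fin n) : WeylAlgebra R n :=
  RingQuot.mkAlgHom R (WeylRel R n) (FreeAlgebra.ι R (.inr i))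

/-- The set `{x_1^p, …, x_n^p, ∂_1^p, …, ∂_n^p}` of `p`-th powers of the generators, so that
`Algebra.adjoin R (pPowSet R n p)` is the subalgebra `C = R[x_1^p, …, x_n^p, ∂_1^p, …, ∂_n^p]`. -/
def pPowSet (R : Type*) [CommRing R] (n p : ℕ) : Set (WeylAlgebra R n) :=
  (Set.range fun i : Fin n => wX R i ^ p) ∪ (Set.range fun i : Fin n => wD R i ^ p)

/-!
Write `A` for the Weyl algebra and `Z` for its center. For each generator `u` of `A` there is an
element `w` for which `⁅w, ·⁆` is the partial derivative with respect to `u`. Differentiating a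
linear relation shows that the ordered monomials with exponents less than `p` are independent over
`Z`; since they span `A` over `C`, they form a basis of `A` over `Z`, and `Z = C`.

Only the commutators `⁅w, u⁆` enter the proof of independence, and `φ` preserves them. Hence the
`Z`-linear endomorphism of `A` sending each monomial to its image under `φ` is injective. On a
finite free module over a commutative ring this makes it right regular. An element `q` commuting
with `φ(A)` defines a `Z`-linear map `⁅q, ·⁆` killing the image of this endomorphism, so `q` is
central. This gives the invariants, and also `φ(Z) ⊆ Z`.

For finite generation, `φ(A)` is spanned over `φ(Z)` by the images of the finitely many monomials,
so `A` is finitely generated as a bimodule over `φ(A)` if and only if it is a finitely generated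
`φ(Z)`-module. As `A` is finite over `Z` and `Z` is a `Z`-linear retract of `A`, this holds if and
only if `Z` is finite over `φ(Z)`.
-/

section Commutator

variable {A : Type*} [Ring A]

theorem ring_lie_mul (w a b : A) : ⁅w, a * b⁆ = ⁅w, a⁆ * b + a * ⁅w, b⁆ := by
  simp only [Ring.lie_def]
  noncomm_ring

theorem lie_pow_of_commute {w u : A} (h : Commute ⁅w, u⁆ u) (n : ℕ) :
    ⁅w, u ^ n⁆ = n * (⁅w, u⁆ * u ^ (n - 1)) := by
  induction n with
  | zero => simp [Ring.lie_def]
  | succ n ih =>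
    rcases n.eq_zero_or_pos with rfl | hn
    · simp
    · rw [pow_succ, ring_lie_mul, ih, ← (h.pow_right n).eq, mul_assoc, mul_assoc,
        pow_sub_one_mul hn.ne', Nat.add_sub_cancel]
      push_cast
      noncomm_ring

theorem commute_pow_of_natCast_eq_zero {w u : A} (h : Commute ⁅w, u⁆ u) {p : ℕ}
    (hp : (p : A) = 0) : Commute w (u ^ p) := by
  rw [commute_iff_lie_eq, lie_pow_of_commute h, hp, zero_mul]

theorem lie_mul_pow_of_commute_of_lie_eq_one {w c u : A} (hc : Commute w c) (h : ⁅w, u⁆ = 1)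
    (n : ℕ) : ⁅w, c * u ^ n⁆ = n * c * u ^ (n - 1) := by
  rw [ring_lie_mul, hc.lie_eq, lie_pow_of_commute (h ▸ Commute.one_left u), h, zero_mul, zero_add,
    one_mul, ← mul_assoc, Nat.cast_comm]

variable {k : Type*} [CommRing k] [Algebra k A]

theorem linearIndependent_pow_of_lie_eq_one {w u : A} (h : ⁅w, u⁆ = 1) {N : ℕ}
    (hN : ∀ a, 0 < a → a < N → IsUnit (a : A)) :
    LinearIndependent (Subalgebra.centralizer k {w}) fun a : Fin N ↦ u ^ (a : ℕ) := by
  rw [Fintype.linearIndependent_iff]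
  induction N with
  | zero => exact fun _ _ a ↦ a.elim0
  | succ N ih =>
    intro g hg
    -- `⁅w, ·⁆` differentiates with respect to `u`, so it lowers the degree of a relation.
    have lie_term (a : Fin (N + 1)) :
        ⁅w, g a • u ^ (a : ℕ)⁆ = ((a : ℕ) * g a) • u ^ ((a : ℕ) - 1) :=
      lie_mul_pow_of_commute_of_lie_eq_one ((g a).2 w rfl) h a
    have sum_lie_eq_zero : ∑ a : Fin N, ((a + 1 : ℕ) * g a.succ) • u ^ (a : ℕ) = 0 := by
      have : ∑ a : Fin (N + 1), ⁅w, g a • u ^ (a : ℕ)⁆ = 0 := by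
        simp only [Ring.lie_def, Finset.sum_sub_distrib, ← Finset.mul_sum, ← Finset.sum_mul, hg,
          mul_zero, zero_mul, sub_zero]
      simpa [lie_term, Fin.sum_univ_succ] using this
    have tail_eq_zero (a : Fin N) : g a.succ = 0 := by
      have := ih (fun b hb hbN ↦ hN b hb (by lia)) _ sum_lie_eq_zero a
      have hunit := hN (a + 1) (by lia) (by lia)
      exact Subtype.ext (hunit.mul_right_eq_zero.mp (by simpa using congrArg Subtype.val this))
    refine Fin.cases (Subtype.ext ?_) tail_eq_zero
    simpa [Fin.sum_univ_succ, tail_eq_zero, Subalgebra.smul_def] using hg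

theorem lie_mem_adjoin {s : Set A} {v : A} (h : ∀ x ∈ s, ⁅v, x⁆ ∈ Algebra.adjoin k s) {x : A}
    (hx : x ∈ Algebra.adjoin k s) : ⁅v, x⁆ ∈ Algebra.adjoin k s := by
  induction hx using Algebra.adjoin_induction with
  | mem x hx => exact h x hx
  | algebraMap r => simp [Ring.lie_def, Algebra.commutes]
  | add x y _ _ hx hy =>
    have : ⁅v, x + y⁆ = ⁅v, x⁆ + ⁅v, y⁆ := by
      simp only [Ring.lie_def]
      noncomm_ring
    exact this ▸ add_mem hx hy
  | mul x y hxs hys hx hy =>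
    exact ring_lie_mul v x y ▸ add_mem (mul_mem hx hys) (mul_mem hxs hy)

theorem mul_mem_mul_of_lie_mem {Q : Submodule k A} {B : Subalgebra k A} {v : A}
    (hQ : ∀ y ∈ Q, y * v ∈ Q) (hB : ∀ x ∈ B, ⁅v, x⁆ ∈ B) {z : A}
    (hz : z ∈ Q * Subalgebra.toSubmodule B) : z * v ∈ Q * Subalgebra.toSubmodule B := by
  induction hz using Submodule.mul_induction_on' with
  | mem_mul_mem y hy x hx =>
    have : y * x * v = y * v * x - y * ⁅v, x⁆ := by
      simp only [Ring.lie_def]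
      noncomm_ring
    rw [this]
    exact sub_mem (Submodule.mul_mem_mul (hQ y hy) hx) (Submodule.mul_mem_mul hy (hB x hx))
  | add y _ x _ hy hx => exact add_mul y x v ▸ add_mem hy hx

theorem submodule_eq_top_of_mul_mem {s : Set A} (hs : Algebra.adjoin k s = ⊤) {Q : Submodule k A}
    (one_mem : 1 ∈ Q) (mul_mem : ∀ v ∈ s, ∀ y ∈ Q, y * v ∈ Q) : Q = ⊤ := by
  have mul_mem_of_adjoin (a : A) (ha : a ∈ Algebra.adjoin k s) : ∀ y ∈ Q, y * a ∈ Q := by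
    induction ha using Algebra.adjoin_induction with
    | mem v hv => exact mul_mem v hv
    | algebraMap r =>
      intro y hy
      rw [← Algebra.commutes, ← Algebra.smul_def]
      exact Q.smul_mem r hy
    | add a b _ _ ha hb => exact fun y hy ↦ mul_add y a b ▸ add_mem (ha y hy) (hb y hy)
    | mul a b _ _ ha hb => exact fun y hy ↦ mul_assoc y a b ▸ hb _ (ha y hy)
  exact eq_top_iff.mpr fun a _ ↦ one_mul a ▸ mul_mem_of_adjoin a (hs ▸ Algebra.mem_top) 1 one_mem

open Polynomial in
theorem span_range_pow_eq_adjoin {u : A} {p : ℕ} (hp : p ≠ 0) (hu : u ^ p ∈ (⊥ : Subalgebra k A)) :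
    Submodule.span k (Set.range fun a : Fin p ↦ u ^ (a : ℕ)) =
      Subalgebra.toSubmodule (Algebra.adjoin k {u}) := by
  classical
  nontriviality k
  obtain ⟨c, hc⟩ := Algebra.mem_bot.mp hu
  rw [← Submodule.span_range_natDegree_eq_adjoin (monic_X_pow_sub_C c hp) (by simp [hc]),
    natDegree_X_pow_sub_C]
  congr 1
  ext x
  simp [Fin.exists_iff]

end Commutator

section OrderedMonomial

variable {p m : ℕ}

/-- The ordered monomial `u₀ ^ α₀ * ⋯ * uₘ₋₁ ^ αₘ₋₁`. The `uᵢ` need not commute, and the exponents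
are truncated at `p`. -/
def orderedMonomial {A : Type*} [Monoid A] (u : Fin m → A) (α : Fin m → Fin p) : A :=
  (List.ofFn fun i ↦ u i ^ (α i : ℕ)).prod

section Monoid

variable {A : Type*} [Monoid A]

theorem orderedMonomial_snoc (u : Fin (m + 1) → A) (β : Fin m → Fin p) (a : Fin p) :
    orderedMonomial u (Fin.snoc β a : Fin (m + 1) → Fin p) =
      orderedMonomial (Fin.init u) β * u (Fin.last m) ^ (a : ℕ) := by
  rw [orderedMonomial, List.ofFn_succ', List.prod_concat]
  simp [orderedMonomial, Fin.init]

theorem orderedMonomial_zero [NeZero p] (u : Fin m → A) :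
    orderedMonomial u (0 : Fin m → Fin p) = 1 :=
  List.prod_eq_one (by simp)

theorem map_orderedMonomial {B F : Type*} [Monoid B] [FunLike F A B] [MonoidHomClass F A B] (f : F)
    (u : Fin m → A) (α : Fin m → Fin p) :
    f (orderedMonomial u α) = orderedMonomial (f ∘ u) α := by
  simp [orderedMonomial, map_list_prod, List.map_ofFn, Function.comp_def]

theorem commute_orderedMonomial {q : A} {u : Fin m → A} (h : ∀ i, Commute q (u i))
    (α : Fin m → Fin p) : Commute q (orderedMonomial u α) :=
  Commute.list_prod_right _ _ (by simpa [List.forall_mem_ofFn_iff] using fun i ↦ (h i).pow_right _)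

end Monoid

variable {A k : Type*} [Ring A] [CommRing k] [Algebra k A]

theorem linearIndependent_orderedMonomial [FaithfulSMul k A]
    (hp : ∀ a, 0 < a → a < p → IsUnit (a : A)) {u w : Fin m → A}
    (hwu : ∀ i j, ⁅w i, u j⁆ = if i = j then 1 else 0) :
    LinearIndependent k (orderedMonomial (p := p) u) := by
  induction m with
  | zero =>
    rw [Fintype.linearIndependent_iff]
    intro g hg α
    have : algebraMap k A (g α) = 0 := by
      simpa [orderedMonomial, Algebra.algebraMap_eq_smul_one, Subsingleton.elim default α] using hg
    exact (FaithfulSMul.algebraMap_eq_zero_iff k A).mp this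
  | succ m ih =>
    let S := Subalgebra.centralizer k {w (Fin.last m)}
    have init_mem (β : Fin m → Fin p) : orderedMonomial (Fin.init u) β ∈ S := by
      rintro _ rfl
      refine commute_orderedMonomial (fun i ↦ ?_) β
      rw [Fin.init, commute_iff_lie_eq, hwu, if_neg (Fin.castSucc_ne_last i).symm]
    have init_indep : LinearIndependent k fun β ↦ (⟨_, init_mem β⟩ : S) :=
      .of_comp S.val.toLinearMap <| ih (w := Fin.init w) fun i j ↦ by simp [Fin.init, hwu]
    have last_indep : LinearIndependent S fun a : Fin p ↦ u (Fin.last m) ^ (a : ℕ) :=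
      linearIndependent_pow_of_lie_eq_one (by simp [hwu]) hp
    rw [← linearIndependent_equiv ((Equiv.prodComm _ _).trans (Fin.snocEquiv fun _ ↦ Fin p))]
    convert linearIndependent_smul init_indep last_indep using 2 with ⟨β, a⟩
    exact orderedMonomial_snoc u β a

theorem span_range_orderedMonomial_succ (hp : p ≠ 0) (u : Fin (m + 1) → A)
    (hu : u (Fin.last m) ^ p ∈ (⊥ : Subalgebra k A)) :
    Submodule.span k (Set.range (orderedMonomial (p := p) u)) =
      Submodule.span k (Set.range (orderedMonomial (p := p) (Fin.init u))) *
        Subalgebra.toSubmodule (Algebra.adjoin k {u (Fin.last m)}) := by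
  rw [← span_range_pow_eq_adjoin hp hu, Submodule.span_mul_span]
  congr 1
  ext x
  simp only [Set.mem_mul, Set.exists_range_iff, ← orderedMonomial_snoc]
  rw [Set.mem_range]
  exact ((Equiv.prodComm _ _).trans (Fin.snocEquiv fun _ ↦ Fin p)).surjective.exists.trans
    Prod.exists

theorem mul_mem_span_orderedMonomial (hp : p ≠ 0) {u : Fin m → A}
    (hpow : ∀ i, u i ^ p ∈ (⊥ : Subalgebra k A))
    (hlie : ∀ i j, ⁅u i, u j⁆ ∈ (⊥ : Subalgebra k A)) (j : Fin m) {z : A}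
    (hz : z ∈ Submodule.span k (Set.range (orderedMonomial (p := p) u))) :
    z * u j ∈ Submodule.span k (Set.range (orderedMonomial (p := p) u)) := by
  induction m generalizing z with
  | zero => exact j.elim0
  | succ m ih =>
    rw [span_range_orderedMonomial_succ hp u (hpow _)] at hz ⊢
    induction j using Fin.lastCases with
    | last =>
      rw [← Subalgebra.isIdempotentElem_toSubmodule, ← mul_assoc]
      exact Submodule.mul_mem_mul hz (Algebra.self_mem_adjoin_singleton k _)
    | cast j =>
      refine mul_mem_mul_of_lie_mem (fun y hy ↦ ?_) (fun x hx ↦ lie_mem_adjoin ?_ hx) hz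
      · exact ih (u := Fin.init u) (fun i ↦ hpow _) (fun i j ↦ hlie _ _) j hy
      · rintro _ rfl
        exact bot_le (a := Algebra.adjoin k _) (hlie _ _)

theorem span_range_orderedMonomial_eq_top (hp : p ≠ 0) {u : Fin m → A}
    (hpow : ∀ i, u i ^ p ∈ (⊥ : Subalgebra k A))
    (hlie : ∀ i j, ⁅u i, u j⁆ ∈ (⊥ : Subalgebra k A))
    (hu : Algebra.adjoin k (Set.range u) = ⊤) :
    Submodule.span k (Set.range (orderedMonomial (p := p) u)) = ⊤ := by
  have : NeZero p := ⟨hp⟩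
  refine submodule_eq_top_of_mul_mem hu (Submodule.subset_span ⟨0, orderedMonomial_zero u⟩) ?_
  rintro _ ⟨j, rfl⟩ y hy
  exact mul_mem_span_orderedMonomial hp hpow hlie j hy

end OrderedMonomial

section FreeModule

variable {k M : Type*} [CommRing k] [AddCommGroup M] [Module k M]

theorem isRightRegular_of_injective [Module.Free k M] [Module.Finite k M] {f : Module.End k M}
    (hf : Function.Injective f) : IsRightRegular f := by
  classical
  let e := LinearMap.toMatrixAlgEquiv (Module.Free.chooseBasis k M)
  have f_left : IsLeftRegular f := fun g h hgh ↦
    LinearMap.ext fun v ↦ hf (LinearMap.congr_fun hgh v)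
  have matrix_left : IsLeftRegular (e f) := fun X Y hXY ↦ e.symm.injective <| f_left <|
    e.injective <| by simpa using hXY
  have matrix_right : IsRightRegular (e f) := Matrix.isLeftRegular_iff_isRightRegular.mp matrix_left
  exact fun g h hgh ↦ e.injective <| matrix_right <| by simpa using congrArg e hgh

end FreeModule

section Twist

variable {A B : Type*} [Ring A] [Ring B]

theorem centralizer_range_eq_center_of_linearIndependent {ι : Type*} [Finite ι] (φ : A →+* A)
    (b : Module.Basis ι (Subring.center A) A)
    (hb : LinearIndependent (Subring.center A) (φ ∘ b)) :
    Subring.centralizer (Set.range φ) = Subring.center A := by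
  refine le_antisymm (fun q hq ↦ Subring.mem_center_iff.mpr fun a ↦ ?_)
    (Subring.center_le_centralizer _)
  have : Module.Free (Subring.center A) A := .of_basis b
  have : Module.Finite (Subring.center A) A := .of_basis b
  have mul_eq :
      LinearMap.mulRight (Subring.center A) q = LinearMap.mulLeft (Subring.center A) q := by
    refine isRightRegular_of_injective (b.injective_constr_of_linearIndependent (R₂ := ℕ) hb) ?_
    exact b.ext fun i ↦ by simpa using hq (φ (b i)) ⟨b i, rfl⟩
  exact LinearMap.congr_fun mul_eq a

theorem map_mem_center_of_centralizer_range_eq_center {φ : A →+* A}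
    (hφ : Subring.centralizer (Set.range φ) = Subring.center A) {z : A}
    (hz : z ∈ Subring.center A) : φ z ∈ Subring.center A := by
  rw [← hφ]
  rintro _ ⟨a, rfl⟩
  rw [← map_mul, ← map_mul, Subring.mem_center_iff.mp hz a]

open Submodule

theorem span_range_le_span_image_center_mul (φ : A →+* B) {s : Set A}
    (hs : span (Subring.center A) s = ⊤) :
    span ℤ (Set.range φ) ≤ span ℤ (φ '' Subring.center A) * span ℤ (φ '' s) := by
  rw [span_le]
  rintro _ ⟨a, rfl⟩
  induction (hs ▸ mem_top : a ∈ span (Subring.center A) s) using closure_induction with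
  | zero => simp
  | add x y _ _ hx hy => exact map_add φ x y ▸ add_mem hx hy
  | smul_mem z x hx =>
    rw [Subring.smul_def, smul_eq_mul, map_mul]
    exact mul_mem_mul (subset_span ⟨z, z.2, rfl⟩) (subset_span ⟨x, hx, rfl⟩)

theorem span_image_center_mul_self (φ : A →+* B) :
    span ℤ (φ '' Subring.center A) * span ℤ (φ '' Subring.center A) =
      span ℤ (φ '' Subring.center A) := by
  rw [span_mul_span, ← Set.image_mul, coe_mul_coe]

variable {φ : A →+* A}

theorem span_image_center_mul_comm (hφ : ∀ z ∈ Subring.center A, φ z ∈ Subring.center A)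
    (N : Submodule ℤ A) :
    span ℤ (φ '' Subring.center A) * N = N * span ℤ (φ '' Subring.center A) := by
  refine mul_comm_of_commute fun m hm a _ ↦ ?_
  have span_le_center : span ℤ (φ '' Subring.center A) ≤
      (Subring.center A).toAddSubgroup.toIntSubmodule :=
    span_le.mpr (Set.image_subset_iff.mpr hφ)
  exact (Subring.mem_center_iff.mp (span_le_center hm) a).symm

theorem map_span_image_center_mul_le (hφ : ∀ z ∈ Subring.center A, φ z ∈ Subring.center A)
    (f : A →ₗ[Subring.center A] A) (N : Submodule ℤ A) :
    (span ℤ (φ '' Subring.center A) * N).map (f.restrictScalars ℤ) ≤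
      span ℤ (φ '' Subring.center A) * N.map (f.restrictScalars ℤ) := by
  rw [← span_eq N, span_mul_span, map_span, map_span, span_mul_span]
  refine span_mono ?_
  rintro _ ⟨_, ⟨_, ⟨z, hz, rfl⟩, x, hx, rfl⟩, rfl⟩
  exact ⟨φ z, ⟨z, hz, rfl⟩, f x, ⟨x, hx, rfl⟩, (f.map_smul ⟨φ z, hφ z hz⟩ x).symm⟩

theorem exists_fg_span_image_center_mul_eq_top [Module.Finite (Subring.center A) A]
    (hφ : ∀ z ∈ Subring.center A, φ z ∈ Subring.center A) {S : Submodule ℤ A} (hS : S.FG)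
    (hΦ : span ℤ (Set.range φ) * S * span ℤ (Set.range φ) = ⊤) :
    ∃ N : Submodule ℤ A, N.FG ∧ span ℤ (φ '' Subring.center A) * N = ⊤ := by
  obtain ⟨s, s_finite, hs⟩ := fg_def.mp (Module.Finite.fg_top (R := Subring.center A) (M := A))
  set P := span ℤ (φ '' Subring.center A)
  set V := span ℤ (φ '' s)
  have hV : V.FG := fg_span (s_finite.image φ)
  have P_comm (N : Submodule ℤ A) : P * N = N * P := span_image_center_mul_comm hφ N
  refine ⟨V * S * V, (hV.mul hS).mul hV, top_le_iff.mp ?_⟩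
  calc ⊤ ≤ P * V * S * (P * V) := by
          rw [← hΦ]
          gcongr <;> exact span_range_le_span_image_center_mul φ hs
    _ = P * P * (V * S * V) := by
      rw [← mul_assoc, ← P_comm]
      simp only [mul_assoc]
    _ = P * (V * S * V) := by rw [span_image_center_mul_self φ]

theorem exists_fg_range_mul_mul_range_eq_top_iff [Module.Finite (Subring.center A) A]
    (hφ : ∀ z ∈ Subring.center A, φ z ∈ Subring.center A)
    (π : A →ₗ[Subring.center A] Subring.center A) (hπ : π 1 = 1) :
    (∃ S : Submodule ℤ A, S.FG ∧ span ℤ (Set.range φ) * S * span ℤ (Set.range φ) = ⊤) ↔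
      ∃ T : Submodule ℤ A, T.FG ∧ (∀ t ∈ T, t ∈ Subring.center A) ∧
        ∀ c ∈ Subring.center A, c ∈ span ℤ (φ '' Subring.center A) * T := by
  constructor
  · rintro ⟨S, hS, hΦ⟩
    obtain ⟨N, hN, hPN⟩ := exists_fg_span_image_center_mul_eq_top hφ hS hΦ
    let f : A →ₗ[Subring.center A] A := Algebra.linearMap _ A ∘ₗ π
    refine ⟨N.map (f.restrictScalars ℤ), hN.map _, ?_, fun c hc ↦ ?_⟩
    · rintro _ ⟨x, -, rfl⟩
      exact (π x).2
    · have f_fixes : f c = c := by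
        have := f.map_smul (⟨c, hc⟩ : Subring.center A) 1
        simpa [f, hπ, Subring.smul_def] using this
      exact map_span_image_center_mul_le hφ f N ⟨c, hPN ▸ mem_top, f_fixes⟩
  · rintro ⟨T, hT, -, hPT⟩
    obtain ⟨s, s_finite, hs⟩ := fg_def.mp (Module.Finite.fg_top (R := Subring.center A) (M := A))
    refine ⟨T * span ℤ s, hT.mul (fg_span s_finite), top_le_iff.mp ?_⟩
    have one_le_range : 1 ≤ span ℤ (Set.range φ) := one_le.mpr (subset_span ⟨1, map_one φ⟩)
    calc ⊤ ≤ span ℤ (Subring.center A) * span ℤ s := by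
          simpa using span_range_le_span_image_center_mul (RingHom.id A) hs
      _ ≤ span ℤ (φ '' Subring.center A) * T * span ℤ s := by
        gcongr
        exact span_le.mpr hPT
      _ ≤ span ℤ (Set.range φ) * T * span ℤ s := by
        gcongr
        exact Set.image_subset_range _ _
      _ = span ℤ (Set.range φ) * (T * span ℤ s) * 1 := by rw [mul_one, mul_assoc]
      _ ≤ span ℤ (Set.range φ) * (T * span ℤ s) * span ℤ (Set.range φ) := by gcongr

theorem closure_range_mul_mul_range {α : Type*} (φ : α → A) (s : Set A) :
    AddSubgroup.closure {x : A | ∃ g ∈ s, ∃ a b : α, x = φ a * g * φ b} =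
      (span ℤ (Set.range φ) * span ℤ s * span ℤ (Set.range φ)).toAddSubgroup := by
  rw [span_mul_span, span_mul_span, span_int_eq_addSubgroupClosure]
  congr 1
  ext x
  simp only [Set.mem_ofPred_eq, Set.mem_mul, Set.mem_range, exists_exists_eq_and, ↓existsAndEq]
  grind

theorem closure_image_mul {α : Type*} (φ : α → A) (C : Set α) (t : Set A) :
    AddSubgroup.closure {x : A | ∃ g ∈ t, ∃ a ∈ C, x = φ a * g} =
      (span ℤ (φ '' C) * span ℤ t).toAddSubgroup := by
  rw [span_mul_span, span_int_eq_addSubgroupClosure]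
  congr 1
  ext x
  simp only [Set.mem_ofPred_eq, Set.mem_mul, Set.mem_image]
  grind

theorem twisted_bimodule_fg_iff [Module.Finite (Subring.center A) A]
    (hφ : ∀ z ∈ Subring.center A, φ z ∈ Subring.center A)
    (π : A →ₗ[Subring.center A] Subring.center A) (hπ : π 1 = 1) :
    (∃ s : Finset A,
        AddSubgroup.closure {x : A | ∃ g ∈ s, ∃ a b : A, x = φ a * g * φ b} = ⊤) ↔
      ∃ t : Finset A, (∀ g ∈ t, g ∈ Subring.center A) ∧
        ∀ c ∈ Subring.center A,
          c ∈ AddSubgroup.closure {x : A | ∃ g ∈ t, ∃ a ∈ Subring.center A, x = φ a * g} := by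
  have span_le_center (t : Finset A) : (∀ g ∈ span ℤ (t : Set A), g ∈ Subring.center A) ↔
      ∀ g ∈ t, g ∈ Subring.center A :=
    span_le (p := (Subring.center A).toAddSubgroup.toIntSubmodule)
  have fg_iff := exists_fg_range_mul_mul_range_eq_top_iff hφ π hπ
  simp only [FG, exists_exists_eq_and, span_le_center] at fg_iff
  have bimodule_closure (s : Finset A) := closure_range_mul_mul_range φ s
  have center_closure (t : Finset A) := closure_image_mul φ (Subring.center A) t
  simp only [SetLike.mem_coe] at bimodule_closure center_closure
  simp [bimodule_closure, center_closure, fg_iff]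

end Twist

theorem algebraMap_surjective_of_linearIndependent {k Z A ι : Type*} [CommRing k] [CommRing Z]
    [Ring A] [Algebra k Z] [Algebra Z A] [Algebra k A] [IsScalarTower k Z A] [Finite ι] {b : ι → A}
    (hb : LinearIndependent Z b) (hspan : Submodule.span k (Set.range b) = ⊤) {i₀ : ι}
    (hi₀ : b i₀ = 1) : Function.Surjective (algebraMap k Z) := by
  classical
  have := Fintype.ofFinite ι
  intro z
  obtain ⟨c, hc⟩ := (Submodule.mem_span_range_iff_exists_fun k).mp
    (hspan ▸ Submodule.mem_top : algebraMap Z A z ∈ Submodule.span k (Set.range b))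
  have combinations_eq :
      ∑ i, algebraMap k Z (c i) • b i = ∑ i, (Pi.single i₀ z : ι → Z) i • b i := by
    simp [hc, Pi.single_apply, ite_smul, hi₀, Algebra.algebraMap_eq_smul_one]
  refine ⟨c i₀, ?_⟩
  simpa using Fintype.linearIndependent_iffₛ.mp hb _ _ combinations_eq i₀

theorem adjoin_eq_top_of_algebraMap_mem_bot {R k A : Type*} [CommRing R] [CommRing k] [Ring A]
    [Algebra R A] [Algebra k A] (hRk : ∀ r : R, algebraMap R A r ∈ (⊥ : Subalgebra k A)) {s : Set A}
    (hs : Algebra.adjoin R s = ⊤) : Algebra.adjoin k s = ⊤ := by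
  refine eq_top_iff.mpr fun a _ ↦ ?_
  induction (hs ▸ Algebra.mem_top : a ∈ Algebra.adjoin R s) using Algebra.adjoin_induction with
  | mem x hx => exact Algebra.subset_adjoin hx
  | algebraMap r => exact bot_le (a := Algebra.adjoin k s) (hRk r)
  | add x y _ _ hx hy => exact add_mem (hx trivial) (hy trivial)
  | mul x y _ _ hx hy => exact mul_mem (hx trivial) (hy trivial)

theorem isUnit_natCast_of_pos_of_lt {R A : Type*} [CommRing R] [Ring A] [Algebra R A] {p : ℕ}
    (hp : p.Prime) [CharP R p] {a : ℕ} (ha : 0 < a) (hap : a < p) : IsUnit (a : A) := by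
  have : IsUnit (a : R) := (CharP.isUnit_natCast_iff hp).mpr (Nat.not_dvd_of_pos_of_lt ha hap)
  simpa using this.map (algebraMap R A)

/-- Generators `u` of an `R`-algebra whose commutators are scalars, together with elements `w` for
which the derivations `⁅wᵢ, ·⁆` are dual to `u`. In the Weyl algebra, `u` consists of the `xᵢ` and
`∂ᵢ`, and `w` of the `∂ᵢ` and `-xᵢ`. Only `u` is required to generate, so that the duality still
makes sense for the images of `u` and `w` under a ring endomorphism. -/
structure IsWeylSystem (R : Type*) {A ι : Type*} [CommRing R] [Ring A] [Algebra R A]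
    [DecidableEq ι] (u w : ι → A) : Prop where
  adjoin_eq_top : Algebra.adjoin R (Set.range u) = ⊤
  lie_mem_bot (i j : ι) : ⁅u i, u j⁆ ∈ (⊥ : Subalgebra R A)
  lie_dual (i j : ι) : ⁅w i, u j⁆ = if i = j then 1 else 0

namespace IsWeylSystem

variable {R A : Type*} [CommRing R] [Ring A] [Algebra R A] {p : ℕ}

theorem comp_equiv {ι κ : Type*} [DecidableEq ι] [DecidableEq κ] {u w : ι → A}
    (h : IsWeylSystem R u w) (e : κ ≃ ι) : IsWeylSystem R (u ∘ e) (w ∘ e) where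
  adjoin_eq_top := by rw [e.surjective.range_comp, h.adjoin_eq_top]
  lie_mem_bot i j := h.lie_mem_bot (e i) (e j)
  lie_dual i j := by simp [h.lie_dual]

theorem sumElim {ι : Type*} [DecidableEq ι] {x d : ι → A} (hxx : ∀ i j, ⁅x i, x j⁆ = 0)
    (hdd : ∀ i j, ⁅d i, d j⁆ = 0) (hdx : ∀ i j, ⁅d i, x j⁆ = if i = j then 1 else 0)
    (hxd : Algebra.adjoin R (Set.range x ∪ Set.range d) = ⊤) :
    IsWeylSystem R (Sum.elim x d) (Sum.elim d (-x)) := by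
  have lie_swap (a b : A) : ⁅a, b⁆ = -⁅b, a⁆ := by simp only [Ring.lie_def, neg_sub]
  have neg_lie (a b : A) : ⁅-a, b⁆ = ⁅b, a⁆ := by simp only [Ring.lie_def]; noncomm_ring
  have lie_mem_bot (i j : ι) : ⁅d i, x j⁆ ∈ (⊥ : Subalgebra R A) := by
    rw [hdx]
    split_ifs
    exacts [one_mem _, zero_mem _]
  refine ⟨Set.Sum.elim_range x d ▸ hxd, ?_, ?_⟩
  · rintro (i | i) (j | j)
    · simp [hxx]
    · exact lie_swap (x i) (d j) ▸ neg_mem (lie_mem_bot j i)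
    · exact lie_mem_bot i j
    · simp [hdd]
  · rintro (i | i) (j | j)
    · simp [hdx]
    · simp [hdd]
    · simp [neg_lie, hxx]
    · simp [neg_lie, hdx, eq_comm]

theorem pow_mem_center {ι : Type*} [DecidableEq ι] {u w : ι → A} [CharP R p]
    (h : IsWeylSystem R u w) (i : ι) : u i ^ p ∈ Subring.center A := by
  have p_eq_zero : (p : A) = 0 := by
    rw [← map_natCast (algebraMap R A), CharP.cast_eq_zero, map_zero]
  have commute_generator (j : ι) : Commute (u j) (u i ^ p) := by
    obtain ⟨r, hr⟩ := Algebra.mem_bot.mp (h.lie_mem_bot j i)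
    exact commute_pow_of_natCast_eq_zero (hr ▸ Algebra.commute_algebraMap_left r (u i)) p_eq_zero
  refine Subring.mem_center_iff.mpr fun a ↦ (Commute.symm ?_).eq
  refine Algebra.commute_of_mem_adjoin_of_forall_mem_commute (s := Set.range u) (R := R)
    (h.adjoin_eq_top ▸ Algebra.mem_top) ?_
  rintro _ ⟨j, rfl⟩
  exact (commute_generator j).symm

variable {m : ℕ} {u w : Fin m → A}

theorem span_orderedMonomial_eq_top {k : Type*} [CommRing k] [Algebra k A]
    (h : IsWeylSystem R u w) (hp : p ≠ 0) (hRk : ∀ r : R, algebraMap R A r ∈ (⊥ : Subalgebra k A))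
    (hpow : ∀ i, u i ^ p ∈ (⊥ : Subalgebra k A)) :
    Submodule.span k (Set.range (orderedMonomial (p := p) u)) = ⊤ := by
  refine span_range_orderedMonomial_eq_top hp hpow (fun i j ↦ ?_)
    (adjoin_eq_top_of_algebraMap_mem_bot hRk h.adjoin_eq_top)
  obtain ⟨r, hr⟩ := Algebra.mem_bot.mp (h.lie_mem_bot i j)
  exact hr ▸ hRk r

theorem linearIndependent_map_orderedMonomial {k B : Type*} [CommRing k] [Ring B] [Algebra k B]
    [FaithfulSMul k B] (h : IsWeylSystem R u w) (hp : p.Prime) [CharP R p] (φ : A →+* B) :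
    LinearIndependent k (φ ∘ orderedMonomial (p := p) u) := by
  have isUnit_natCast (a : ℕ) (ha : 0 < a) (hap : a < p) : IsUnit (a : B) := by
    simpa using (isUnit_natCast_of_pos_of_lt (R := R) (A := A) hp ha hap).map φ
  have map_lie_dual (i j : Fin m) : ⁅φ (w i), φ (u j)⁆ = if i = j then 1 else 0 := by
    rw [Ring.lie_def, ← map_mul, ← map_mul, ← map_sub, ← Ring.lie_def, h.lie_dual]
    split_ifs <;> simp
  have map_monomials : φ ∘ orderedMonomial (p := p) u = orderedMonomial (φ ∘ u) :=
    funext (map_orderedMonomial φ u)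
  rw [map_monomials]
  exact linearIndependent_orderedMonomial isUnit_natCast (w := φ ∘ w) map_lie_dual

theorem linearIndependent_orderedMonomial {k : Type*} [CommRing k] [Algebra k A] [FaithfulSMul k A]
    (h : IsWeylSystem R u w) (hp : p.Prime) [CharP R p] :
    LinearIndependent k (orderedMonomial (p := p) u) :=
  h.linearIndependent_map_orderedMonomial hp (RingHom.id A)

theorem adjoin_pow_eq_center (h : IsWeylSystem R u w) (hp : p.Prime) [CharP R p] :
    Algebra.adjoin R (Set.range fun i ↦ u i ^ p) = Subalgebra.center R A := by
  have : NeZero p := ⟨hp.ne_zero⟩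
  refine le_antisymm (Algebra.adjoin_le ?_) fun z hz ↦ ?_
  · rintro _ ⟨i, rfl⟩
    exact h.pow_mem_center i
  -- Independence over the center against spanning over the smaller ring `K` forces equality.
  let K : Subring (Subring.center A) :=
    (Algebra.adjoin R (Set.range fun i ↦ u i ^ p)).toSubring.comap (Subring.center A).subtype
  have mem_bot {c : A} (hc : c ∈ Subring.center A)
      (hcK : c ∈ Algebra.adjoin R (Set.range fun i ↦ u i ^ p)) : c ∈ (⊥ : Subalgebra K A) :=
    Algebra.mem_bot.mpr ⟨⟨⟨c, hc⟩, hcK⟩, rfl⟩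
  have span_eq_top : Submodule.span K (Set.range (orderedMonomial (p := p) u)) = ⊤ :=
    h.span_orderedMonomial_eq_top hp.ne_zero
      (fun r ↦ mem_bot (Subalgebra.algebraMap_mem (Subalgebra.center R A) r)
        (Subalgebra.algebraMap_mem _ r))
      fun i ↦ mem_bot (h.pow_mem_center i) (Algebra.subset_adjoin ⟨i, rfl⟩)
  obtain ⟨c, hc⟩ := algebraMap_surjective_of_linearIndependent
    (h.linearIndependent_orderedMonomial (k := Subring.center A) hp) span_eq_top
    (orderedMonomial_zero u) ⟨z, hz⟩
  have hz_eq : ((c : Subring.center A) : A) = z := congrArg Subtype.val hc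
  exact hz_eq ▸ c.2

/-- The basis of `A` over its center formed by the ordered monomials in the generators. -/
noncomputable def monomialBasis (h : IsWeylSystem R u w) (hp : p.Prime) [CharP R p] :
    Module.Basis (Fin m → Fin p) (Subring.center A) A :=
  .mk (h.linearIndependent_orderedMonomial hp) <| by
    refine (h.span_orderedMonomial_eq_top hp.ne_zero (fun r ↦ ?_) fun i ↦ ?_).ge
    · exact Algebra.mem_bot.mpr ⟨⟨_, Subalgebra.algebraMap_mem (Subalgebra.center R A) r⟩, rfl⟩
    · exact Algebra.mem_bot.mpr ⟨⟨_, h.pow_mem_center i⟩, rfl⟩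

theorem coe_monomialBasis (h : IsWeylSystem R u w) (hp : p.Prime) [CharP R p] :
    ⇑(h.monomialBasis hp) = orderedMonomial u :=
  Module.Basis.coe_mk _ _

theorem monomialBasis_zero [NeZero p] (h : IsWeylSystem R u w) (hp : p.Prime) [CharP R p] :
    h.monomialBasis hp 0 = 1 := by
  rw [coe_monomialBasis, orderedMonomial_zero]

theorem centralizer_range_eq_center (h : IsWeylSystem R u w) (hp : p.Prime) [CharP R p]
    (φ : A →+* A) : Subring.centralizer (Set.range φ) = Subring.center A :=
  centralizer_range_eq_center_of_linearIndependent φ (h.monomialBasis hp) <|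
    h.coe_monomialBasis hp ▸ h.linearIndependent_map_orderedMonomial hp φ

end IsWeylSystem

theorem weylAlgebra_twisted_bimodule_properties_general {R A : Type*} [CommRing R] [Ring A]
    [Algebra R A] {p : ℕ} (hp : p.Prime) [CharP R p] {ι : Type*} [Finite ι] [DecidableEq ι]
    {u w : ι → A} (h : IsWeylSystem R u w) (φ : A →+* A) :
    (∀ r ∈ Algebra.adjoin R (Set.range fun i ↦ u i ^ p), ∀ y : A, φ r * y = y * φ r)
    ∧
    {y : A | ∀ a : A, φ a * y = y * φ a}
      = (Algebra.adjoin R (Set.range fun i ↦ u i ^ p) : Set A)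
    ∧
    ((∃ s : Finset A,
        AddSubgroup.closure {x : A | ∃ g ∈ s, ∃ a b : A, x = φ a * g * φ b} = ⊤)
      ↔
      (∃ t : Finset A, (∀ g ∈ t, g ∈ Algebra.adjoin R (Set.range fun i ↦ u i ^ p)) ∧
        ∀ c ∈ Algebra.adjoin R (Set.range fun i ↦ u i ^ p),
          c ∈ AddSubgroup.closure {x : A |
            ∃ g ∈ t, ∃ a ∈ Algebra.adjoin R (Set.range fun i ↦ u i ^ p), x = φ a * g})) := by
  obtain ⟨m, ⟨e⟩⟩ := Finite.exists_equiv_fin ι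
  replace h := h.comp_equiv e.symm
  have range_pow : Set.range (fun i ↦ u i ^ p) = Set.range fun i ↦ (u ∘ e.symm) i ^ p :=
    (e.symm.surjective.range_comp fun i ↦ u i ^ p).symm
  have : NeZero p := ⟨hp.ne_zero⟩
  have : Module.Finite (Subring.center A) A := .of_basis (h.monomialBasis hp)
  have centralizer_eq := h.centralizer_range_eq_center hp φ
  have map_center (z : A) (hz : z ∈ Subring.center A) : φ z ∈ Subring.center A :=
    map_mem_center_of_centralizer_range_eq_center centralizer_eq hz
  rw [range_pow, h.adjoin_pow_eq_center hp]
  refine ⟨fun r hr y ↦ (Subring.mem_center_iff.mp (map_center r hr) y).symm, ?_, ?_⟩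
  · refine Set.Subset.antisymm (fun y hy ↦ ?_) fun y hy a ↦ Subring.mem_center_iff.mp hy (φ a)
    have : y ∈ Subring.centralizer (Set.range φ) := Set.forall_mem_range.mpr hy
    exact centralizer_eq.le this
  · refine twisted_bimodule_fg_iff map_center ((h.monomialBasis hp).coord 0) ?_
    rw [← h.monomialBasis_zero hp, Module.Basis.coord_apply, Module.Basis.repr_self,
      Finsupp.single_eq_same]

namespace WeylAlgebra

variable (R : Type*) [CommRing R] {n : ℕ}

theorem lie_wX_wX (i j : Fin n) : ⁅wX R i, wX R j⁆ = 0 := by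
  rw [Ring.lie_def, sub_eq_zero, wX, wX, ← map_mul, ← map_mul,
    RingQuot.mkAlgHom_rel R (WeylRel.xx i j)]

theorem lie_wD_wD (i j : Fin n) : ⁅wD R i, wD R j⁆ = 0 := by
  rw [Ring.lie_def, sub_eq_zero, wD, wD, ← map_mul, ← map_mul,
    RingQuot.mkAlgHom_rel R (WeylRel.dd i j)]

theorem lie_wD_wX (i j : Fin n) : ⁅wD R i, wX R j⁆ = if i = j then 1 else 0 := by
  rw [Ring.lie_def, wD, wX, ← map_mul, ← map_mul, RingQuot.mkAlgHom_rel R (WeylRel.dx i j), map_add,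
    add_sub_cancel_left]
  split_ifs <;> simp

variable (n)

theorem adjoin_range_wX_union_range_wD :
    Algebra.adjoin R (Set.range (wX R (n := n)) ∪ Set.range (wD R)) = ⊤ := by
  have range_eq : Set.range (wX R (n := n)) ∪ Set.range (wD R) =
      RingQuot.mkAlgHom R (WeylRel R n) '' Set.range (FreeAlgebra.ι R) := by
    rw [← Set.range_comp, ← Set.Sum.elim_range]
    congr 1
    ext (i | i) <;> rfl
  rw [range_eq, ← AlgHom.map_adjoin, FreeAlgebra.adjoin_range_ι, Algebra.map_top,
    AlgHom.range_eq_top]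
  exact RingQuot.mkAlgHom_surjective R _

theorem isWeylSystem :
    IsWeylSystem R (Sum.elim (wX R (n := n)) (wD R)) (Sum.elim (wD R) (-wX R)) :=
  .sumElim (lie_wX_wX R) (lie_wD_wD R) (lie_wD_wX R) (adjoin_range_wX_union_range_wD R n)

theorem pPowSet_eq_range_pow (p : ℕ) :
    pPowSet R n p = Set.range fun i ↦ Sum.elim (wX R (n := n)) (wD R) i ^ p := by
  ext x
  simp [pPowSet]

end WeylAlgebra

/-- Let `R` be a commutative ring of prime characteristic `p`, `A = A_n(R)`
the `n`-th Weyl algebra, `C = R[x_1^p, …, x_n^p, ∂_1^p, …, ∂_n^p]` its center and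
`φ : A → A` an `R`-algebra homomorphism.  Consider the `A`-bimodule `₍φ₎A₍φ₎`, i.e. `A` with
bimodule multiplication `x·s·y = φ(x) s φ(y)`.  Then:
(a) `₍φ₎A₍φ₎` is `C`-linear, i.e. `r·m = m·r` for all `r ∈ C`;
(b) the set of bimodule invariants `{m : a·m = m·a for all a ∈ A}` equals `C`;
(c) `₍φ₎A₍φ₎` is a finitely generated `A`-bimodule (i.e. finitely many elements `g` generate
    it under sums of elements `φ(a) g φ(b)`) if and only if `C` is a finitely generated
    module over its subring `φ(C)`, i.e. `φ|_C` is finite. -/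
theorem weylAlgebra_twisted_bimodule_properties (R : Type*) [CommRing R] (n p : ℕ)
    (hp : p.Prime) [CharP R p]
    (φ : WeylAlgebra R n →ₐ[R] WeylAlgebra R n) :
    (∀ r ∈ Algebra.adjoin R (pPowSet R n p), ∀ m : WeylAlgebra R n, φ r * m = m * φ r)
    ∧
    {m : WeylAlgebra R n | ∀ a : WeylAlgebra R n, φ a * m = m * φ a}
      = (Algebra.adjoin R (pPowSet R n p) : Set (WeylAlgebra R n))
    ∧
    ((∃ s : Finset (WeylAlgebra R n),
        AddSubgroup.closure {x : WeylAlgebra R n |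
          ∃ g ∈ s, ∃ a b : WeylAlgebra R n, x = φ a * g * φ b} = ⊤)
      ↔
      (∃ t : Finset (WeylAlgebra R n), (∀ g ∈ t, g ∈ Algebra.adjoin R (pPowSet R n p)) ∧
        ∀ c ∈ Algebra.adjoin R (pPowSet R n p),
          c ∈ AddSubgroup.closure {x : WeylAlgebra R n |
            ∃ g ∈ t, ∃ a ∈ Algebra.adjoin R (pPowSet R n p), x = φ a * g})) := by
  rw [WeylAlgebra.pPowSet_eq_range_pow]
  exact weylAlgebra_twisted_bimodule_properties_general hp (WeylAlgebra.isWeylSystem R n)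
    (φ : WeylAlgebra R n →+* WeylAlgebra R n)
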